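/- Let k, m, n be positive integers with k+m ≤ n and let w, w′ ∈ Sₙ. If the structure constant c^{w′}_{w, r[k,m]} is nonzero, then w <ₖ w′ in the k-Bruhat order and ℓ(w′) = ℓ(w) + m. -/

import Mathlib

open Equiv MvPolynomial

attribute [local instance] Classical.propDecidable

namespace SchubertPieri

/-- Position `j ∈ {1,…,N}` (1-indexed) as an element of `Fin N` (0-indexed). -/
def pos (N : ℕ) [NeZero N] (j : ℕ) : Fin N :=
  ⟨(j - 1) % N, Nat.mod_lt _ (Nat.pos_of_ne_zero (NeZero.ne N))⟩

/-- The transposition `t_{a,b}` interchanging positions `a` and `b` (1-indexed). -/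
def t (N : ℕ) [NeZero N] (a b : ℕ) : Equiv.Perm (Fin N) :=
  Equiv.swap (pos N a) (pos N b)

/-- The value `w(j)` for `j ∈ {1,…,N}` (1-indexed). -/
def val {N : ℕ} [NeZero N] (w : Equiv.Perm (Fin N)) (j : ℕ) : ℕ :=
  (w (pos N j) : ℕ) + 1

/-- The length of `w`: its number of inversions. -/
def len {N : ℕ} (w : Equiv.Perm (Fin N)) : ℕ :=
  (Finset.univ.filter fun p : Fin N × Fin N => p.1 < p.2 ∧ w p.2 < w p.1).card

/-- The longest permutation `w₀ : j ↦ N+1-j`. -/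
def w0 (N : ℕ) : Equiv.Perm (Fin N) :=
  ⟨Fin.rev, Fin.rev, Fin.rev_rev, Fin.rev_rev⟩

/-- The product `t_{a 0, b 0} ⋯ t_{a (i-1), b (i-1)}`. -/
def tProd (N : ℕ) [NeZero N] (a b : ℕ → ℕ) (i : ℕ) : Equiv.Perm (Fin N) :=
  ((List.range i).map fun j => t N (a j) (b j)).prod

/-- `r[k,m] = t_{k,k+1} t_{k,k+2} ⋯ t_{k,k+m}`, the (m+1)-cycle with
`r[k,m](k) = k+m` and `r[k,m](j) = j-1` for `k+1 ≤ j ≤ k+m`. -/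
def rPerm (N k m : ℕ) [NeZero N] : Equiv.Perm (Fin N) :=
  ((List.range m).map fun i => t N k (k + 1 + i)).prod

/-- `c[k,m] = t_{k,k+1} t_{k-1,k+1} ⋯ t_{k-m+1,k+1}`, the (m+1)-cycle with
`c[k,m](j) = j+1` for `k-m+1 ≤ j ≤ k` and `c[k,m](k+1) = k-m+1`. -/
def cPerm (N k m : ℕ) [NeZero N] : Equiv.Perm (Fin N) :=
  ((List.range m).map fun i => t N (k - i) (k + 1)).prod

/-- The conditions that `aᵢ ≤ k < bᵢ` (with all indices in `{1,…,N}`) and that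
`ℓ(w t_{a₁ b₁} ⋯ t_{aᵢ bᵢ}) = ℓ(w) + i` for `1 ≤ i ≤ m`. -/
def StepOK (N k m : ℕ) [NeZero N] (w : Equiv.Perm (Fin N)) (a b : ℕ → ℕ) : Prop :=
  (∀ i, i < m → 1 ≤ a i ∧ a i ≤ k ∧ k < b i ∧ b i ≤ N) ∧
  (∀ i, i ≤ m → len (w * tProd N a b i) = len w + i)

/-- `w →_{r[k,m]} w'`. -/
def RelR (N k m : ℕ) [NeZero N] (w w' : Equiv.Perm (Fin N)) : Prop :=
  ∃ a b : ℕ → ℕ, StepOK N k m w a b ∧ w' = w * tProd N a b m ∧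
    (∀ i j, i < m → j < m → i ≠ j → b i ≠ b j)

/-- `w →_{c[k,m]} w'`. -/
def RelC (N k m : ℕ) [NeZero N] (w w' : Equiv.Perm (Fin N)) : Prop :=
  ∃ a b : ℕ → ℕ, StepOK N k m w a b ∧ w' = w * tProd N a b m ∧
    (∀ i j, i < m → j < m → i ≠ j → a i ≠ a j)

/-- The divided difference operator `∂ᵢ f = (f - sᵢ·f)/(xᵢ - xᵢ₊₁)` (1-indexed `i`);
the quotient is exact, and is recovered here as the (unique) witness of divisibility. -/
noncomputable def divDiff {N : ℕ} [NeZero N] (i : ℕ) (f : MvPolynomial (Fin N) ℤ) :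
    MvPolynomial (Fin N) ℤ :=
  if h : (X (pos N i) - X (pos N (i + 1))) ∣ (f - rename (⇑(t N i (i + 1))) f) then
    h.choose
  else 0

/-- `∂_{a₁} ∘ ⋯ ∘ ∂_{a_p}` applied to `f`, for a word `l = [a₁,…,a_p]`. -/
noncomputable def divDiffWord {N : ℕ} [NeZero N] (l : List ℕ) (f : MvPolynomial (Fin N) ℤ) :
    MvPolynomial (Fin N) ℤ :=
  l.foldr divDiff f

/-- Auxiliary: produce a reduced word for `w` by repeatedly removing a descent. -/
def redWordAux (N : ℕ) [NeZero N] : ℕ → Equiv.Perm (Fin N) → List ℕ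
  | 0, _ => []
  | fuel + 1, w =>
    match ((List.range (N - 1)).map (· + 1)).find? (fun i => decide (val w (i + 1) < val w i)) with
    | none => []
    | some i => redWordAux N fuel (w * t N i (i + 1)) ++ [i]

/-- A canonical reduced word `(a₁,…,a_p)` for `w`, i.e. `w = s_{a₁} ⋯ s_{a_p}` with `p = ℓ(w)`. -/
def redWord (N : ℕ) [NeZero N] (w : Equiv.Perm (Fin N)) : List ℕ :=
  redWordAux N (N * N) w

/-- The staircase monomial `x₁^{N-1} x₂^{N-2} ⋯ x_{N-1}`. -/
noncomputable def staircase (N : ℕ) : MvPolynomial (Fin N) ℤ :=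
  ∏ i : Fin N, X i ^ (N - 1 - (i : ℕ))

/-- The Schubert polynomial `𝔖_w = ∂_{w⁻¹w₀}(x₁^{N-1} ⋯ x_{N-1})`. -/
noncomputable def schubertPoly (N : ℕ) [NeZero N] (w : Equiv.Perm (Fin N)) :
    MvPolynomial (Fin N) ℤ :=
  divDiffWord (redWord N (w⁻¹ * w0 N)) (staircase N)

/-- The ideal of `Rₙ` generated by the symmetric polynomials with zero constant term. -/
noncomputable def symIdeal (N : ℕ) : Ideal (MvPolynomial (Fin N) ℤ) :=
  Ideal.span {f : MvPolynomial (Fin N) ℤ | f.IsSymmetric ∧ constantCoeff f = 0}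

/-- The ring `Hₙ = Rₙ/𝒮`. -/
abbrev HRing (N : ℕ) := MvPolynomial (Fin N) ℤ ⧸ symIdeal N

/-- The class of the Schubert polynomial `𝔖_w` in `Hₙ`. -/
noncomputable def SS (N : ℕ) [NeZero N] (w : Equiv.Perm (Fin N)) : HRing N :=
  Ideal.Quotient.mk (symIdeal N) (schubertPoly N w)

/-- The complete homogeneous symmetric polynomial of degree `m` in `x₁,…,x_k`. -/
noncomputable def hPoly (N k m : ℕ) : MvPolynomial (Fin N) ℤ :=
  ∑ s ∈ (Finset.univ.filter fun i : Fin N => (i : ℕ) < k).sym m,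
    (Multiset.map X (s : Multiset (Fin N))).prod

/-- The elementary symmetric polynomial of degree `m` in `x₁,…,x_k`. -/
noncomputable def ePoly (N k m : ℕ) : MvPolynomial (Fin N) ℤ :=
  ∑ s ∈ (Finset.univ.filter fun i : Fin N => (i : ℕ) < k).powersetCard m, ∏ i ∈ s, X i

/-- Covering relation of the `k`-Bruhat order. -/
def kCover (N k : ℕ) [NeZero N] (w w' : Equiv.Perm (Fin N)) : Prop :=
  ∃ a b : ℕ, 1 ≤ a ∧ a ≤ k ∧ k < b ∧ b ≤ N ∧ w' = w * t N a b ∧ len w' = len w + 1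

/-- The (strict) `k`-Bruhat order `<ₖ`. -/
def kBruhat (N k : ℕ) [NeZero N] : Equiv.Perm (Fin N) → Equiv.Perm (Fin N) → Prop :=
  Relation.TransGen (kCover N k)

/-- The label `w⁽ⁱ⁺¹⁾(a_{i+1})` (0-indexed `i`) of the `(i+1)`-st step of a path. -/
def label {N : ℕ} [NeZero N] (w : Equiv.Perm (Fin N)) (a b : ℕ → ℕ) (i : ℕ) : ℕ :=
  val (w * tProd N a b (i + 1)) (a i)

/-- `(a,b)` encodes a path of length `m` in the `k`-Bruhat order from `w` to `w'`
(normalized so that `a i = b i = 0` for `i ≥ m`, making the encoding unique). -/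
def PathWit (N k m : ℕ) [NeZero N] (w w' : Equiv.Perm (Fin N))
    (ab : (ℕ → ℕ) × (ℕ → ℕ)) : Prop :=
  StepOK N k m w ab.1 ab.2 ∧ w' = w * tProd N ab.1 ab.2 m ∧
    ∀ i, m ≤ i → ab.1 i = 0 ∧ ab.2 i = 0

/-- Paths of length `m` in the `k`-Bruhat order from `w` to `w'` with strictly
increasing labels. -/
def IncPaths (N k m : ℕ) [NeZero N] (w w' : Equiv.Perm (Fin N)) :
    Set ((ℕ → ℕ) × (ℕ → ℕ)) :=
  {ab | PathWit N k m w w' ab ∧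
    ∀ i j, i < j → j < m → label w ab.1 ab.2 i < label w ab.1 ab.2 j}

/-- Paths of length `m` in the `k`-Bruhat order from `w` to `w'` with strictly
decreasing labels. -/
def DecPaths (N k m : ℕ) [NeZero N] (w w' : Equiv.Perm (Fin N)) :
    Set ((ℕ → ℕ) × (ℕ → ℕ)) :=
  {ab | PathWit N k m w w' ab ∧
    ∀ i j, i < j → j < m → label w ab.1 ab.2 j < label w ab.1 ab.2 i}


/-- The cycle `(x₁ x₂ … x_r)` (sending `x₁ ↦ x₂ ↦ ⋯ ↦ x_r ↦ x₁`), as a product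
of transpositions. -/
def cycleList (N : ℕ) [NeZero N] (l : List ℕ) : Equiv.Perm (Fin N) :=
  ((l.zip l.tail).map fun p => t N p.1 p.2).prod

/-- The Grassmannian permutation `h[k;p,q]` of descent `k` and hook shape `(p,1^{q-1})`:
the `(p+q)`-cycle `(k-q+1  k-q+2 … k  k+p  k+p-1 … k+1)`. -/
def hookPerm (N k p q : ℕ) [NeZero N] : Equiv.Perm (Fin N) :=
  cycleList N (((List.range q).map fun i => k - q + 1 + i) ++
    ((List.range p).reverse.map fun i => k + 1 + i))

/-- `w|ₚ ∈ S_{N-1}`: delete row `p` and column `w(p)` from the permutation matrix of `w`. -/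
def drop {N : ℕ} (w : Equiv.Perm (Fin (N + 1))) (p : Fin (N + 1)) : Equiv.Perm (Fin N) :=
  Equiv.removeNone (((finSuccEquiv' p).symm.trans (w : Fin (N + 1) ≃ Fin (N + 1))).trans
    (finSuccEquiv' (w p)))

/-- `lam` is a partition with at most `k` parts (1-indexed parts `lam 1 ≥ lam 2 ≥ ⋯`,
normalized by `lam 0 = 0`). -/
def IsPartFun (k : ℕ) (lam : ℕ → ℕ) : Prop :=
  lam 0 = 0 ∧ (∀ j, 1 ≤ j → lam (j + 1) ≤ lam j) ∧ ∀ j, k < j → lam j = 0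

/-- `h_d(x₁,…,x_k)` for an integer `d`, with `h_d = 0` for `d < 0`. -/
noncomputable def hPolyZ (N k : ℕ) (d : ℤ) : MvPolynomial (Fin N) ℤ :=
  if 0 ≤ d then hPoly N k d.toNat else 0

/-- The Schur polynomial `s_λ(x₁,…,x_k)`, via the Jacobi–Trudi determinant
`det(h_{λᵢ+j-i})_{1 ≤ i,j ≤ k}`. -/
noncomputable def schurPoly (N k : ℕ) (lam : ℕ → ℕ) : MvPolynomial (Fin N) ℤ :=
  (Matrix.of fun i j : Fin k =>
    hPolyZ N k ((lam ((i : ℕ) + 1) : ℤ) + (j : ℕ) - (i : ℕ))).det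

/-- `r_j = #{i : aᵢ = j}` (with `i` ranging over `0,…,m-1`, 0-indexed). -/
def rJ (a : ℕ → ℕ) (m j : ℕ) : ℕ := ((Finset.range m).filter fun i => a i = j).card

/-- `μ_j = r_{j+1} + ⋯ + r_k`. -/
def muJ (a : ℕ → ℕ) (m k j : ℕ) : ℕ :=
  if j = 0 then 0 else ∑ j' ∈ Finset.Icc (j + 1) k, rJ a m j'

/-- `λ_j = μ_j + r_j`. -/
def lamJ (a : ℕ → ℕ) (m k j : ℕ) : ℕ :=
  if j = 0 then 0 else muJ a m k j + rJ a m j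

/-- `d_j = #{i : bᵢ = N+1-j}` (with `i` ranging over `0,…,m-1`, 0-indexed). -/
def dJ (b : ℕ → ℕ) (m N j : ℕ) : ℕ :=
  ((Finset.range m).filter fun i => b i = N + 1 - j).card

/-- `μ′_j = d_{j+1} + ⋯ + d_{N-k}`. -/
def muJ' (b : ℕ → ℕ) (m N k j : ℕ) : ℕ :=
  if j = 0 then 0 else ∑ j' ∈ Finset.Icc (j + 1) (N - k), dJ b m N j'

/-- `λ′_j = μ′_j + d_j`. -/
def lamJ' (b : ℕ → ℕ) (m N k j : ℕ) : ℕ :=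
  if j = 0 then 0 else muJ' b m N k j + dJ b m N j

/-- The conjugate (transpose) partition: `νᵗ_j = #{i : νᵢ ≥ j}`, for `ν` with at
most `k` parts. -/
def conjPart (k : ℕ) (nu : ℕ → ℕ) (j : ℕ) : ℕ :=
  if j = 0 then 0 else ((Finset.Icc 1 k).filter fun i => j ≤ nu i).card

/-- `wv` is the Grassmannian permutation of descent `k` and shape `nu`:
`wv(j) = j + ν_{k+1-j}` for `1 ≤ j ≤ k`, and `wv` is increasing on `{k+1,…,N}`. -/
def IsGrassOf (N k : ℕ) [NeZero N] (nu : ℕ → ℕ) (wv : Equiv.Perm (Fin N)) : Prop :=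
  (∀ j, 1 ≤ j → j ≤ k → val wv j = j + nu (k + 1 - j)) ∧
  (∀ j, k < j → j < N → val wv j < val wv (j + 1))

/-- Paths of length `m` in the `k`-Bruhat order from `w` to `w'` whose labels
increase strictly for the first `p` steps and decrease strictly thereafter
(positions `p, p+1, …, m` being decreasing, 1-indexed). -/
def IncDecPaths (N k m p : ℕ) [NeZero N] (w w' : Equiv.Perm (Fin N)) :
    Set ((ℕ → ℕ) × (ℕ → ℕ)) :=
  {ab | PathWit N k m w w' ab ∧
    (∀ i j, i < j → j < p → label w ab.1 ab.2 i < label w ab.1 ab.2 j) ∧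
    (∀ i j, p - 1 ≤ i → i < j → j < m → label w ab.1 ab.2 j < label w ab.1 ab.2 i)}

/-- Paths of length `m` in the `k`-Bruhat order from `w` to `w'` whose labels
decrease strictly for the first `q` steps and increase strictly thereafter. -/
def DecIncPaths (N k m q : ℕ) [NeZero N] (w w' : Equiv.Perm (Fin N)) :
    Set ((ℕ → ℕ) × (ℕ → ℕ)) :=
  {ab | PathWit N k m w w' ab ∧
    (∀ i j, i < j → j < q → label w ab.1 ab.2 j < label w ab.1 ab.2 i) ∧
    (∀ i j, q - 1 ≤ i → i < j → j < m → label w ab.1 ab.2 i < label w ab.1 ab.2 j)}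

/-!
Expanding `∂_u (f g)` in the operators `∂_w` applied to `g` turns multiplication by `f` into a
matrix over the polynomial ring. These matrices commute, the one of `f` is triangular for the
length with diagonal entries `u f`, and the constant term of its `(w', w)` entry, for `f = 𝔖_v`, is
the structure constant `c^{w'}_{w,v}`. For `ω = x₁ + ⋯ + x_k` the off-diagonal entries are supported
on covers of the `k`-Bruhat order (Monk's rule).

Let `f` be symmetric in `x₁, …, x_k` and in `x_{k+1}, …, x_N`. Comparing the `(u, w)` entries of
the commuting products of the matrices of `f` and `ω`, where `uω ≠ wω`, produces from a nonzero
entry of `f` at `(u, w)` another one at `(x, w)` or `(u, x)` with `x` one cover closer. If instead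
`uω = wω`, the two permutations lie in the same coset of `S_k × S_{N-k}`, and the symmetry of `f`
forces `u = w`. Hence a nonzero entry gives a chain of covers from `w` to `u`.
-/

section Permutations

variable {N : ℕ}

/-- The set of inversions of `w`. -/
def inversions (w : Perm (Fin N)) : Finset (Fin N × Fin N) :=
  {p | p.1 < p.2 ∧ w p.2 < w p.1}

lemma mem_inversions {w : Perm (Fin N)} {p : Fin N × Fin N} :
    p ∈ inversions w ↔ p.1 < p.2 ∧ w p.2 < w p.1 := by
  simp [inversions]

lemma card_inversions (w : Perm (Fin N)) : (inversions w).card = len w := rfl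

lemma len_one : len (1 : Perm (Fin N)) = 0 := by
  rw [← card_inversions, Finset.card_eq_zero, Finset.eq_empty_iff_forall_notMem]
  exact fun p hp => lt_asymm (mem_inversions.mp hp).1 (mem_inversions.mp hp).2

lemma len_inv (w : Perm (Fin N)) : len w⁻¹ = len w := by
  have h : (inversions w).map ((prodCongr w w).trans (prodComm _ _)).toEmbedding =
      inversions w⁻¹ := by
    ext p
    rw [Finset.mem_map_equiv]
    simp [mem_inversions, and_comm]
  rw [← card_inversions w, ← Finset.card_map, h, card_inversions]

lemma len_w0 : len (w0 N) = ∑ i : Fin N, (N - 1 - (i : ℕ)) := by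
  have h (i : Fin N) : ({j | i < j ∧ w0 N j < w0 N i} : Finset (Fin N)) = Finset.Ioi i := by
    ext j; simp [w0]
  rw [← card_inversions, inversions, ← Finset.univ_product_univ, Finset.card_filter,
    Finset.sum_product]
  simp only [← Finset.card_filter, h, Fin.card_Ioi]

lemma len_mul_w0_add_len (w : Perm (Fin N)) : len (w * w0 N) + len w = len (w0 N) := by
  have h : (inversions (w * w0 N)).map ((prodCongr (w0 N) (w0 N)).trans (prodComm _ _)).toEmbedding
      = inversions (w0 N) \ inversions w := by
    ext ⟨p, q⟩
    have hpq (h : p < q) : w p ≠ w q := w.injective.ne h.ne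
    rw [Finset.mem_map_equiv]
    simp only [mem_inversions, w0, symm_trans_apply, prodComm_symm, prodComm_apply,
      Prod.swap_prod_mk, prodCongr_symm, prodCongr_apply, symm_mk, coe_fn_mk, Prod.map_apply,
      Fin.rev_lt_rev, Perm.mul_apply, Fin.rev_rev, Finset.mem_sdiff]
    grind
  have hw : inversions w ⊆ inversions (w0 N) := fun p hp =>
    mem_inversions.mpr (by simpa [w0] using (mem_inversions.mp hp).1)
  rw [← card_inversions (w * _), ← Finset.card_map, h, ← card_inversions,
    Finset.card_sdiff_add_card_eq_card hw, card_inversions]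

variable [NeZero N]

lemma coe_pos {j : ℕ} (hj : j ∈ Set.Icc 1 N) : (pos N j : ℕ) = j - 1 := by
  obtain ⟨hj₁, hjN⟩ := hj
  exact Nat.mod_eq_of_lt (by omega)

lemma pos_coe_add_one (a : Fin N) : pos N (a + 1) = a :=
  Fin.ext (coe_pos ⟨by omega, a.isLt⟩)

lemma strictMonoOn_pos : StrictMonoOn (pos N) (Set.Icc 1 N) := by
  intro i hi j hj hij
  rw [Fin.lt_def, coe_pos hi, coe_pos hj]
  have := hi.1
  omega

lemma pos_lt_pos_succ {i : ℕ} (hi : i ∈ Set.Ico 1 N) : pos N i < pos N (i + 1) :=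
  strictMonoOn_pos ⟨hi.1, hi.2.le⟩ ⟨by omega, hi.2⟩ i.lt_succ_self

lemma t_apply_left (a b : ℕ) : t N a b (pos N a) = pos N b := swap_apply_left _ _

lemma t_apply_right (a b : ℕ) : t N a b (pos N b) = pos N a := swap_apply_right _ _

/-- The simple transposition `sᵢ = t_{i,i+1}`. -/
abbrev s (i : ℕ) : Perm (Fin N) := t N i (i + 1)

lemma s_mul_self (i : ℕ) : (s i : Perm (Fin N)) * s i = 1 := swap_mul_self _ _

lemma s_inv (i : ℕ) : (s i : Perm (Fin N))⁻¹ = s i := swap_inv _ _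

lemma s_apply_s_apply (i : ℕ) (a : Fin N) : s i (s i a) = a := swap_apply_self _ _ a

lemma mul_s_mul_s (w : Perm (Fin N)) (i : ℕ) : w * s i * s i = w := by
  rw [mul_assoc, s_mul_self, mul_one]

lemma s_mul_s_of_add_one_lt {i j : ℕ} (hi : i ∈ Set.Ico 1 N) (hj : j ∈ Set.Ico 1 N)
    (hij : i + 1 < j) : (s i : Perm (Fin N)) * s j = s j * s i := by
  have h₁ := pos_lt_pos_succ hi
  have h₂ : pos N (i + 1) < pos N j :=
    strictMonoOn_pos ⟨by omega, hi.2⟩ (Set.Ico_subset_Icc_self hj) hij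
  have h₃ := pos_lt_pos_succ hj
  exact (Perm.disjoint_swap_swap (by grind)).commute

lemma s_braid {i : ℕ} (hi : i ∈ Set.Ico 1 N) (hi' : i + 1 ∈ Set.Ico 1 N) :
    (s i : Perm (Fin N)) * s (i + 1) * s i = s (i + 1) * s i * s (i + 1) := by
  have h₁ := (pos_lt_pos_succ hi).ne
  have h₂ := (pos_lt_pos_succ hi').ne
  have h₃ := ((pos_lt_pos_succ hi).trans (pos_lt_pos_succ hi')).ne
  simp only [s, t]
  rw [swap_mul_swap_mul_swap h₁ h₃, swap_comm (pos N i) (pos N (i + 1)),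
    swap_comm (pos N (i + 1)) (pos N (i + 1 + 1)), swap_mul_swap_mul_swap h₂.symm h₃.symm,
    swap_comm]

lemma s_apply_lt_s_apply {i : ℕ} (hi : i ∈ Set.Ico 1 N) {p q : Fin N} (hpq : p < q)
    (hne : (p, q) ≠ (pos N i, pos N (i + 1))) : s i p < s i q := by
  have h₁ := coe_pos (N := N) (Set.Ico_subset_Icc_self hi)
  have h₂ := coe_pos (N := N) (j := i + 1) ⟨by omega, hi.2⟩
  have := hi.1
  simp only [s, t, swap_apply_def, Fin.ext_iff, Fin.lt_def, ne_eq, Prod.mk.injEq] at *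
  split_ifs <;> omega

/-- `w` has a descent at `i`, that is, `w(i) > w(i+1)`. -/
def HasDescentAt (w : Perm (Fin N)) (i : ℕ) : Prop := w (pos N (i + 1)) < w (pos N i)

section Descents

variable {w : Perm (Fin N)} {i : ℕ} (hi : i ∈ Set.Ico 1 N)
include hi

lemma not_hasDescentAt_iff : ¬ HasDescentAt w i ↔ w (pos N i) < w (pos N (i + 1)) := by
  rw [HasDescentAt, not_lt, (w.injective.ne (pos_lt_pos_succ hi).ne).le_iff_lt]

lemma hasDescentAt_mul_s : HasDescentAt (w * s i) i ↔ ¬ HasDescentAt w i := by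
  rw [not_hasDescentAt_iff hi, HasDescentAt, Perm.mul_apply, Perm.mul_apply, t_apply_left,
    t_apply_right]

lemma map_inversions_of_not_hasDescentAt (hw : ¬ HasDescentAt w i) :
    (inversions w).map (prodCongr (s i) (s i)).toEmbedding =
      (inversions (w * s i)).erase (pos N i, pos N (i + 1)) := by
  ext ⟨p, q⟩
  rw [Finset.mem_map_equiv, Finset.mem_erase, mem_inversions, mem_inversions, prodCongr_symm,
    prodCongr_apply, Prod.map_apply, ← Perm.inv_def, s_inv, Perm.mul_apply, Perm.mul_apply,
    ← and_assoc]
  refine and_congr_left fun hpq => ⟨fun h => ⟨?_, ?_⟩, fun h => s_apply_lt_s_apply hi h.2 h.1⟩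
  · rintro ⟨⟩
    rw [t_apply_left, t_apply_right] at h
    exact lt_asymm h (pos_lt_pos_succ hi)
  · rw [← s_apply_s_apply i p, ← s_apply_s_apply i q]
    refine s_apply_lt_s_apply hi h fun hs => hw ?_
    rw [Prod.mk.injEq] at hs
    rwa [hs.1, hs.2] at hpq

lemma len_mul_s_of_not_hasDescentAt (hw : ¬ HasDescentAt w i) : len (w * s i) = len w + 1 := by
  have hmem : (pos N i, pos N (i + 1)) ∈ inversions (w * s i) :=
    mem_inversions.mpr ⟨pos_lt_pos_succ hi, (hasDescentAt_mul_s hi).mpr hw⟩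
  rw [← card_inversions, ← Finset.card_erase_add_one hmem,
    ← map_inversions_of_not_hasDescentAt hi hw, Finset.card_map, card_inversions]

lemma len_mul_s_of_hasDescentAt (hw : HasDescentAt w i) : len (w * s i) + 1 = len w := by
  rw [← len_mul_s_of_not_hasDescentAt hi (by simpa [hasDescentAt_mul_s hi] using hw), mul_s_mul_s]

end Descents

lemma strictMonoOn_of_forall_not_hasDescentAt {w : Perm (Fin N)} {a b : ℕ} (ha : 1 ≤ a)
    (hb : b ≤ N) (h : ∀ i ∈ Set.Ico a b, ¬ HasDescentAt w i) :
    StrictMonoOn (fun j => w (pos N j)) (Set.Icc a b) := by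
  refine strictMonoOn_of_lt_add_one Set.ordConnected_Icc fun i _ hi hi' => ?_
  exact (not_hasDescentAt_iff ⟨ha.trans hi.1, hi'.2.trans hb⟩).mp (h i ⟨hi.1, hi'.2⟩)

lemma eq_one_of_forall_not_hasDescentAt {w : Perm (Fin N)}
    (h : ∀ i ∈ Set.Ico 1 N, ¬ HasDescentAt w i) : w = 1 := by
  have hmono := strictMonoOn_of_forall_not_hasDescentAt le_rfl le_rfl h
  have hw : StrictMono w := fun a b hab => by
    simpa [pos_coe_add_one] using
      hmono ⟨by omega, a.isLt⟩ ⟨by omega, b.isLt⟩ (Nat.add_lt_add_right hab 1)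
  exact DFunLike.coe_injective ((hw.range_inj strictMono_id).mp (by simp))

lemma exists_hasDescentAt {w : Perm (Fin N)} (hw : w ≠ 1) :
    ∃ i ∈ Set.Ico 1 N, HasDescentAt w i := by
  contrapose! hw
  exact eq_one_of_forall_not_hasDescentAt hw

lemma eq_one_of_len_eq_zero {w : Perm (Fin N)} (hw : len w = 0) : w = 1 := by
  by_contra h
  obtain ⟨i, hi, hdes⟩ := exists_hasDescentAt h
  have := len_mul_s_of_hasDescentAt hi hdes
  omega

lemma eq_w0_of_len_eq {w : Perm (Fin N)} (hw : len w = len (w0 N)) : w = w0 N := by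
  have h : w * w0 N = 1 := eq_one_of_len_eq_zero (by have := len_mul_w0_add_len w; omega)
  exact mul_eq_one_iff_eq_inv.mp h

end Permutations

section DividedDifferences

lemma isHomogeneous_of_isHomogeneous_mul {σ R : Type*} [CommRing R] [IsDomain R]
    {p q : MvPolynomial σ R} {m n : ℕ} (hp : p.IsHomogeneous m) (hp₀ : p ≠ 0)
    (hpq : (p * q).IsHomogeneous (m + n)) : q.IsHomogeneous n := by
  let := gradedAlgebra (σ := σ) (R := R)
  have h := DirectSum.coe_decompose_mul_add_of_left_mem (homogeneousSubmodule σ R) (j := n)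
    (b := q) hp
  rw [DirectSum.decompose_of_mem_same _ hpq] at h
  rw [mul_left_cancel₀ hp₀ h]
  exact (DirectSum.decompose (homogeneousSubmodule σ R) q n).2

lemma isSymmetric_of_isHomogeneous_zero {σ R : Type*} [CommSemiring R] {f : MvPolynomial σ R}
    (hf : f.IsHomogeneous 0) : f.IsSymmetric := by
  rw [totalDegree_eq_zero_iff_eq_C.mp ((totalDegree_zero_iff_isHomogeneous σ).mpr hf)]
  exact IsSymmetric.C _

variable {N : ℕ}

lemma X_sub_X_dvd_sub_rename_swap (a b : Fin N) (f : MvPolynomial (Fin N) ℤ) :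
    X a - X b ∣ f - rename (swap a b) f := by
  induction f using MvPolynomial.induction_on with
  | C r => simp
  | add p q hp hq =>
    rw [map_add, add_sub_add_comm]
    exact dvd_add hp hq
  | mul_X p j hp =>
    have hX : (X a - X b : MvPolynomial (Fin N) ℤ) ∣ X j - X (swap a b j) := by
      rw [swap_apply_def]
      split_ifs with h₁ h₂
      · rw [h₁]
      · rw [h₂, ← neg_sub, neg_dvd]
      · simp
    have h : p * X j - rename (swap a b) (p * X j) =
        (p - rename (swap a b) p) * X j + rename (swap a b) p * (X j - X (swap a b j)) := by
      rw [map_mul, rename_X]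
      ring
    rw [h]
    exact dvd_add (hp.mul_right _) (hX.mul_left _)

lemma rename_rename_perm (u v : Perm (Fin N)) (f : MvPolynomial (Fin N) ℤ) :
    rename u (rename v f) = rename (u * v) f := by
  rw [rename_rename, Perm.coe_mul]

variable [NeZero N]

/-- The simple root `xᵢ - xᵢ₊₁`, the denominator of `∂ᵢ`. -/
noncomputable def simpleRoot (i : ℕ) : MvPolynomial (Fin N) ℤ := X (pos N i) - X (pos N (i + 1))

lemma rename_s_simpleRoot (i : ℕ) :
    rename (s i) (simpleRoot i : MvPolynomial (Fin N) ℤ) = -simpleRoot i := by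
  rw [simpleRoot, map_sub, rename_X, rename_X, t_apply_left, t_apply_right, neg_sub]

lemma rename_s_rename_s (i : ℕ) (f : MvPolynomial (Fin N) ℤ) :
    rename (s i) (rename (s i) f) = f := by
  rw [rename_rename_perm, s_mul_self, Perm.coe_one, rename_id_apply]

lemma simpleRoot_mul_divDiff (i : ℕ) (f : MvPolynomial (Fin N) ℤ) :
    simpleRoot i * divDiff i f = f - rename (s i) f := by
  have h := X_sub_X_dvd_sub_rename_swap (pos N i) (pos N (i + 1)) f
  rw [divDiff, dif_pos (show _ ∣ f - rename (t N i (i + 1)) f from h)]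
  exact h.choose_spec.symm

section SimpleReflection

variable {i : ℕ} (hi : i ∈ Set.Ico 1 N)
include hi

lemma simpleRoot_ne_zero : (simpleRoot i : MvPolynomial (Fin N) ℤ) ≠ 0 :=
  sub_ne_zero.mpr (X_injective.ne (pos_lt_pos_succ hi).ne)

lemma divDiff_eq_iff {f g : MvPolynomial (Fin N) ℤ} :
    divDiff i f = g ↔ simpleRoot i * g = f - rename (s i) f := by
  rw [← simpleRoot_mul_divDiff, mul_right_inj' (simpleRoot_ne_zero hi), eq_comm]

lemma divDiff_add (f g : MvPolynomial (Fin N) ℤ) :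
    divDiff i (f + g) = divDiff i f + divDiff i g := by
  rw [divDiff_eq_iff hi, mul_add, simpleRoot_mul_divDiff, simpleRoot_mul_divDiff, map_add,
    add_sub_add_comm]

lemma divDiff_mul (f g : MvPolynomial (Fin N) ℤ) :
    divDiff i (f * g) = divDiff i f * g + rename (s i) f * divDiff i g := by
  rw [divDiff_eq_iff hi, map_mul]
  linear_combination g * simpleRoot_mul_divDiff i f + rename (s i) f * simpleRoot_mul_divDiff i g

lemma divDiff_eq_zero_iff {f : MvPolynomial (Fin N) ℤ} :
    divDiff i f = 0 ↔ rename (s i) f = f := by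
  rw [divDiff_eq_iff hi, mul_zero, eq_comm, sub_eq_zero, eq_comm]

lemma rename_s_divDiff (f : MvPolynomial (Fin N) ℤ) :
    rename (s i) (divDiff i f) = divDiff i f := by
  rw [eq_comm, divDiff_eq_iff hi]
  have h := congrArg (rename (s i)) (simpleRoot_mul_divDiff i f)
  rw [map_mul, rename_s_simpleRoot, map_sub, rename_s_rename_s] at h
  linear_combination -h

lemma divDiff_divDiff (f : MvPolynomial (Fin N) ℤ) : divDiff i (divDiff i f) = 0 :=
  (divDiff_eq_zero_iff hi).mpr (rename_s_divDiff hi f)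

lemma isHomogeneous_divDiff {f : MvPolynomial (Fin N) ℤ} {d : ℕ} (hf : f.IsHomogeneous (d + 1)) :
    (divDiff i f).IsHomogeneous d := by
  have hroot : (simpleRoot i : MvPolynomial (Fin N) ℤ).IsHomogeneous 1 :=
    (isHomogeneous_X ℤ _).sub (isHomogeneous_X ℤ _)
  refine isHomogeneous_of_isHomogeneous_mul hroot (simpleRoot_ne_zero hi) ?_
  rw [simpleRoot_mul_divDiff, add_comm 1]
  exact hf.sub hf.rename_isHomogeneous

lemma divDiff_eq_zero_of_isHomogeneous_zero {f : MvPolynomial (Fin N) ℤ}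
    (hf : f.IsHomogeneous 0) : divDiff i f = 0 :=
  (divDiff_eq_zero_iff hi).mpr (isSymmetric_of_isHomogeneous_zero hf _)

end SimpleReflection

lemma divDiff_comm {i j : ℕ} (hi : i ∈ Set.Ico 1 N) (hj : j ∈ Set.Ico 1 N) (hij : i + 1 < j)
    (f : MvPolynomial (Fin N) ℤ) : divDiff i (divDiff j f) = divDiff j (divDiff i f) := by
  have h₁ := pos_lt_pos_succ hi
  have h₂ : pos N (i + 1) < pos N j :=
    strictMonoOn_pos ⟨by omega, hi.2⟩ (Set.Ico_subset_Icc_self hj) hij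
  have h₃ := pos_lt_pos_succ hj
  have hroot : rename (s i) (simpleRoot j : MvPolynomial (Fin N) ℤ) = simpleRoot j ∧
      rename (s j) (simpleRoot i : MvPolynomial (Fin N) ℤ) = simpleRoot i := by
    simp only [simpleRoot, map_sub, rename_X, s, t, swap_apply_def]
    grind
  have hs : rename (s i) (rename (s j) f) = rename (s j) (rename (s i) f) := by
    rw [rename_rename_perm, rename_rename_perm, s_mul_s_of_add_one_lt hi hj hij]
  have hi' := congrArg (rename (s j)) (simpleRoot_mul_divDiff i f)
  have hj' := congrArg (rename (s i)) (simpleRoot_mul_divDiff j f)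
  rw [map_mul, hroot.2, map_sub] at hi'
  rw [map_mul, hroot.1, map_sub] at hj'
  rw [divDiff_eq_iff hi]
  refine mul_left_cancel₀ (simpleRoot_ne_zero hj) ?_
  linear_combination simpleRoot i * simpleRoot_mul_divDiff j (divDiff i f) +
    simpleRoot_mul_divDiff i f - hi' - simpleRoot_mul_divDiff j f + hj' - hs

lemma simpleRoot_mul_divDiff_divDiff_divDiff {i j : ℕ} (hi : i ∈ Set.Ico 1 N)
    (hij : rename (s i) (simpleRoot j : MvPolynomial (Fin N) ℤ) = simpleRoot i + simpleRoot j)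
    (hji : rename (s j) (simpleRoot i : MvPolynomial (Fin N) ℤ) = simpleRoot i + simpleRoot j)
    (f : MvPolynomial (Fin N) ℤ) :
    simpleRoot i * simpleRoot j * (simpleRoot i + simpleRoot j) *
        divDiff i (divDiff j (divDiff i f)) =
      f - rename (s i) f - rename (s j) f + rename (s i) (rename (s j) f) +
        rename (s j) (rename (s i) f) - rename (s i) (rename (s j) (rename (s i) f)) := by
  set g := divDiff i f
  set h := divDiff j g
  have hg := simpleRoot_mul_divDiff i f
  have hsg := congrArg (rename (s j)) hg
  have hssg := congrArg (rename (s i)) hsg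
  have hh := simpleRoot_mul_divDiff j g
  have hsh := congrArg (rename (s i)) hh
  simp only [map_mul, map_sub, map_add, hij, hji, rename_s_simpleRoot, g, rename_s_divDiff hi]
    at hsg hssg hsh
  linear_combination simpleRoot j * (simpleRoot i + simpleRoot j) * simpleRoot_mul_divDiff i h +
    (simpleRoot i + simpleRoot j) * hh - simpleRoot j * hsh + hg - hsg + hssg

lemma divDiff_braid {i : ℕ} (hi : i ∈ Set.Ico 1 N) (hi' : i + 1 ∈ Set.Ico 1 N)
    (f : MvPolynomial (Fin N) ℤ) :
    divDiff i (divDiff (i + 1) (divDiff i f)) =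
      divDiff (i + 1) (divDiff i (divDiff (i + 1) f)) := by
  have h₁ := pos_lt_pos_succ hi
  have h₂ := pos_lt_pos_succ hi'
  have hij : rename (s i) (simpleRoot (i + 1) : MvPolynomial (Fin N) ℤ) =
      simpleRoot i + simpleRoot (i + 1) := by
    rw [simpleRoot, simpleRoot, map_sub, rename_X, rename_X, t_apply_right, s, t,
      swap_apply_of_ne_of_ne (h₁.trans h₂).ne' h₂.ne', sub_add_sub_cancel]
  have hji : rename (s (i + 1)) (simpleRoot i : MvPolynomial (Fin N) ℤ) =
      simpleRoot i + simpleRoot (i + 1) := by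
    rw [simpleRoot, simpleRoot, map_sub, rename_X, rename_X, t_apply_left, s, t,
      swap_apply_of_ne_of_ne h₁.ne (h₁.trans h₂).ne, sub_add_sub_cancel]
  have hs : rename (s i) (rename (s (i + 1)) (rename (s i) f)) =
      rename (s (i + 1)) (rename (s i) (rename (s (i + 1)) f)) := by
    simp only [rename_rename_perm, ← mul_assoc, s_braid hi hi']
  have hsum : (simpleRoot i + simpleRoot (i + 1) : MvPolynomial (Fin N) ℤ) ≠ 0 := by
    rw [simpleRoot, simpleRoot, sub_add_sub_cancel]
    exact sub_ne_zero.mpr (X_injective.ne (h₁.trans h₂).ne)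
  refine mul_left_cancel₀ (mul_ne_zero (mul_ne_zero (simpleRoot_ne_zero hi)
    (simpleRoot_ne_zero hi')) hsum) ?_
  linear_combination simpleRoot_mul_divDiff_divDiff_divDiff hi hij hji f -
    simpleRoot_mul_divDiff_divDiff_divDiff hi' (by rw [hji, add_comm]) (by rw [hij, add_comm]) f -
    hs

end DividedDifferences

section ReducedWords

variable {N : ℕ} {w : Perm (Fin N)} {i j : ℕ}

lemma mem_map_succ_range : i ∈ (List.range (N - 1)).map (· + 1) ↔ i ∈ Set.Ico 1 N := by
  simp only [List.mem_map, List.mem_range, Set.mem_Ico]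
  exact ⟨by omega, fun h => ⟨i - 1, by omega⟩⟩

variable [NeZero N]

lemma s_apply_pos (hi : i ∈ Set.Ico 1 N) (hj : j ∈ Set.Icc 1 N) (h : j ≠ i) (h' : j ≠ i + 1) :
    s i (pos N j) = pos N j :=
  swap_apply_of_ne_of_ne (strictMonoOn_pos.injOn.ne hj (Set.Ico_subset_Icc_self hi) h)
    (strictMonoOn_pos.injOn.ne hj ⟨by omega, hi.2⟩ h')

lemma hasDescentAt_mul_s_of_add_one_lt (hi : i ∈ Set.Ico 1 N) (hj : j ∈ Set.Ico 1 N)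
    (hij : i + 1 < j ∨ j + 1 < i) : HasDescentAt (w * s i) j ↔ HasDescentAt w j := by
  rw [HasDescentAt, Perm.mul_apply, Perm.mul_apply,
    s_apply_pos hi (Set.Ico_subset_Icc_self hj) (by omega) (by omega),
    s_apply_pos hi ⟨by omega, hj.2⟩ (by omega) (by omega), HasDescentAt]

lemma not_hasDescentAt_one (hi : i ∈ Set.Ico 1 N) : ¬ HasDescentAt (1 : Perm (Fin N)) i :=
  (not_hasDescentAt_iff hi).mpr (pos_lt_pos_succ hi)

/-- `l` is a reduced word of `w`: reading `l` from the right, every letter is a descent of what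
remains of `w`. -/
inductive IsReducedWord : List ℕ → Perm (Fin N) → Prop
  | nil : IsReducedWord [] 1
  | concat {l : List ℕ} {w : Perm (Fin N)} {i : ℕ} (hi : i ∈ Set.Ico 1 N) (hw : HasDescentAt w i)
      (h : IsReducedWord l (w * s i)) : IsReducedWord (l ++ [i]) w

lemma redWordAux_one (fuel : ℕ) : redWordAux N fuel 1 = [] := by
  cases fuel with
  | zero => rfl
  | succ fuel =>
    have h : ((List.range (N - 1)).map (· + 1)).find?
        (fun i => decide (val (1 : Perm (Fin N)) (i + 1) < val (1 : Perm (Fin N)) i)) = none := by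
      rw [List.find?_eq_none]
      intro i hi
      simpa [HasDescentAt, val] using not_hasDescentAt_one (mem_map_succ_range.mp hi)
    rw [redWordAux, h]

lemma exists_redWordAux_succ_eq (hw : w ≠ 1) : ∃ i ∈ Set.Ico 1 N, HasDescentAt w i ∧
    ∀ fuel, redWordAux N (fuel + 1) w = redWordAux N fuel (w * s i) ++ [i] := by
  rcases hfind : ((List.range (N - 1)).map (· + 1)).find?
      (fun i => decide (val w (i + 1) < val w i)) with _ | i
  · obtain ⟨i, hi, hdes⟩ := exists_hasDescentAt hw
    have := List.find?_eq_none.mp hfind i (mem_map_succ_range.mpr hi)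
    exact absurd hdes (by simpa [HasDescentAt, val] using this)
  · refine ⟨i, mem_map_succ_range.mp (List.mem_of_find?_eq_some hfind), ?_, fun fuel => ?_⟩
    · simpa [HasDescentAt, val] using List.find?_some hfind
    · rw [redWordAux, hfind]

lemma isReducedWord_redWordAux {fuel : ℕ} (h : len w ≤ fuel) :
    IsReducedWord (redWordAux N fuel w) w := by
  induction fuel generalizing w with
  | zero =>
    rw [eq_one_of_len_eq_zero (Nat.le_zero.mp h)]
    exact .nil
  | succ fuel ih =>
    rcases eq_or_ne w 1 with rfl | hw
    · rw [redWordAux_one]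
      exact .nil
    · obtain ⟨i, hi, hdes, hred⟩ := exists_redWordAux_succ_eq hw
      have := len_mul_s_of_hasDescentAt hi hdes
      rw [hred]
      exact .concat hi hdes (ih (by omega))

variable (w) in
lemma isReducedWord_redWord : IsReducedWord (redWord N w) w := by
  refine isReducedWord_redWordAux ?_
  rw [← card_inversions]
  exact (Finset.card_le_univ _).trans (by simp)

lemma descent_induction {P : Perm (Fin N) → Prop} (one : P 1)
    (mul_s : ∀ w, ∀ i ∈ Set.Ico 1 N, HasDescentAt w i → P (w * s i) → P w) (w : Perm (Fin N)) :
    P w := by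
  suffices ∀ l, IsReducedWord l w → P w from this _ (isReducedWord_redWord w)
  intro l hl
  induction hl with
  | nil => exact one
  | concat hi hw _ ih => exact mul_s _ _ hi hw ih

lemma len_mul_le (u v : Perm (Fin N)) : len (u * v) ≤ len u + len v := by
  induction v using descent_induction with
  | one => simp
  | mul_s v i hi hv ih =>
    have h := len_mul_s_of_hasDescentAt hi hv
    rw [← mul_assoc] at ih
    by_cases huv : HasDescentAt (u * v) i
    · have := len_mul_s_of_hasDescentAt hi huv
      omega
    · have := len_mul_s_of_not_hasDescentAt hi huv
      omega

lemma divDiffWord_concat (l : List ℕ) (i : ℕ) (f : MvPolynomial (Fin N) ℤ) :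
    divDiffWord (l ++ [i]) f = divDiffWord l (divDiff i f) := by
  rw [divDiffWord, List.foldr_append, divDiffWord, List.foldr_cons, List.foldr_nil]

lemma IsReducedWord.divDiffWord_add {l : List ℕ} (h : IsReducedWord l w)
    (f g : MvPolynomial (Fin N) ℤ) :
    divDiffWord l (f + g) = divDiffWord l f + divDiffWord l g := by
  induction h generalizing f g with
  | nil => rfl
  | concat hi _ _ ih => simp only [divDiffWord_concat, divDiff_add hi, ih]

lemma exists_isReducedWord_of_hasDescentAt (hi : i ∈ Set.Ico 1 N) (hj : j ∈ Set.Ico 1 N)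
    (hij : i < j) (hwi : HasDescentAt w i) (hwj : HasDescentAt w j) :
    ∃ l l', IsReducedWord l (w * s i) ∧ IsReducedWord l' (w * s j) ∧
      ∀ f : MvPolynomial (Fin N) ℤ,
        divDiffWord l (divDiff i f) = divDiffWord l' (divDiff j f) := by
  rcases (Nat.succ_le_of_lt hij).eq_or_lt with rfl | hij
  · have hlt : w (pos N (i + 1 + 1)) < w (pos N i) := lt_trans hwj hwi
    have h := s_apply_pos (N := N) hi (j := i + 1 + 1) ⟨by omega, hj.2⟩ (by omega) (by omega)
    have h' := s_apply_pos hj (Set.Ico_subset_Icc_self hi) (by omega) (by omega)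
    obtain ⟨m, hm⟩ : ∃ m, IsReducedWord m (w * s i * s (i + 1) * s i) :=
      ⟨_, isReducedWord_redWord _⟩
    have hm' : IsReducedWord m (w * s (i + 1) * s i * s (i + 1)) := by
      rwa [mul_assoc w, mul_assoc w, ← s_braid hi hj, ← mul_assoc, ← mul_assoc]
    refine ⟨_, _, .concat hj ?_ (.concat hi ?_ hm), .concat hi ?_ (.concat hj ?_ hm'), fun f => ?_⟩
    · simpa only [HasDescentAt, Perm.mul_apply, t_apply_left, t_apply_right, h, h'] using hlt
    · simpa only [HasDescentAt, Perm.mul_apply, t_apply_left, t_apply_right, h, h'] using hwj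
    · simpa only [HasDescentAt, Perm.mul_apply, t_apply_left, t_apply_right, h, h'] using hlt
    · simpa only [HasDescentAt, Perm.mul_apply, t_apply_left, t_apply_right, h, h'] using hwi
    · simp only [divDiffWord_concat, divDiff_braid hi hj]
  · obtain ⟨m, hm⟩ : ∃ m, IsReducedWord m (w * s i * s j) := ⟨_, isReducedWord_redWord _⟩
    have hm' : IsReducedWord m (w * s j * s i) := by
      rwa [mul_assoc, ← s_mul_s_of_add_one_lt hi hj hij, ← mul_assoc]
    refine ⟨_, _, .concat hj ?_ hm, .concat hi ?_ hm', fun f => ?_⟩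
    · exact (hasDescentAt_mul_s_of_add_one_lt hi hj (.inl hij)).mpr hwj
    · exact (hasDescentAt_mul_s_of_add_one_lt hj hi (.inr hij)).mpr hwi
    · simp only [divDiffWord_concat, divDiff_comm hi hj hij]

/-- The instance of Matsumoto's theorem which makes `∂_w` well defined. -/
theorem IsReducedWord.divDiffWord_eq {l l' : List ℕ} (h : IsReducedWord l w)
    (h' : IsReducedWord l' w) (f : MvPolynomial (Fin N) ℤ) :
    divDiffWord l f = divDiffWord l' f := by
  induction hn : len w using Nat.strong_induction_on generalizing w l l' f with
  | h n ih =>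
  have ih_mul_s {i : ℕ} (hi : i ∈ Set.Ico 1 N) (hwi : HasDescentAt w i) {l l' : List ℕ}
      (h : IsReducedWord l (w * s i)) (h' : IsReducedWord l' (w * s i))
      (f : MvPolynomial (Fin N) ℤ) : divDiffWord l f = divDiffWord l' f :=
    ih _ (by have := len_mul_s_of_hasDescentAt hi hwi; omega) h h' f rfl
  cases h with
  | nil =>
    generalize hw : (1 : Perm (Fin N)) = w at h'
    cases h' with
    | nil => rfl
    | concat hi hwi => exact absurd (hw ▸ hwi) (not_hasDescentAt_one hi)
  | @concat l _ i hi hwi h =>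
  cases h' with
  | nil => exact absurd hwi (not_hasDescentAt_one hi)
  | @concat l' _ j hj hwj h' =>
  rw [divDiffWord_concat, divDiffWord_concat]
  rcases lt_trichotomy i j with hij | rfl | hij
  · obtain ⟨m, m', hm, hm', heq⟩ := exists_isReducedWord_of_hasDescentAt hi hj hij hwi hwj
    rw [ih_mul_s hi hwi h hm, heq, ih_mul_s hj hwj h' hm']
  · exact ih_mul_s hi hwi h h' _
  · obtain ⟨m, m', hm, hm', heq⟩ := exists_isReducedWord_of_hasDescentAt hj hi hij hwj hwi
    rw [ih_mul_s hi hwi h hm', ← heq, ih_mul_s hj hwj h' hm]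

end ReducedWords

section PermDivDiff

variable {N : ℕ} [NeZero N]

/-- The divided difference operator `∂_w`, as an additive map. -/
noncomputable def permDivDiff (w : Perm (Fin N)) :
    MvPolynomial (Fin N) ℤ →+ MvPolynomial (Fin N) ℤ :=
  AddMonoidHom.mk' (divDiffWord (redWord N w)) (isReducedWord_redWord w).divDiffWord_add

lemma schubertPoly_eq_permDivDiff (w : Perm (Fin N)) :
    schubertPoly N w = permDivDiff (w⁻¹ * w0 N) (staircase N) := rfl

lemma IsReducedWord.permDivDiff_eq {l : List ℕ} {w : Perm (Fin N)} (h : IsReducedWord l w)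
    (f : MvPolynomial (Fin N) ℤ) : permDivDiff w f = divDiffWord l f :=
  (isReducedWord_redWord w).divDiffWord_eq h f

lemma permDivDiff_one (f : MvPolynomial (Fin N) ℤ) : permDivDiff (1 : Perm (Fin N)) f = f :=
  IsReducedWord.nil.permDivDiff_eq f

lemma permDivDiff_mul_s_divDiff {w : Perm (Fin N)} {i : ℕ} (hi : i ∈ Set.Ico 1 N)
    (hw : HasDescentAt w i) (f : MvPolynomial (Fin N) ℤ) :
    permDivDiff (w * s i) (divDiff i f) = permDivDiff w f := by
  rw [(IsReducedWord.concat hi hw (isReducedWord_redWord _)).permDivDiff_eq, divDiffWord_concat]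
  rfl

lemma permDivDiff_divDiff {w : Perm (Fin N)} {i : ℕ} (hi : i ∈ Set.Ico 1 N)
    (f : MvPolynomial (Fin N) ℤ) : permDivDiff w (divDiff i f) =
      if HasDescentAt w i then 0 else permDivDiff (w * s i) f := by
  split_ifs with hw
  · rw [← permDivDiff_mul_s_divDiff hi hw, divDiff_divDiff hi, map_zero]
  · rw [← permDivDiff_mul_s_divDiff hi ((hasDescentAt_mul_s hi).mpr hw), mul_s_mul_s]

lemma permDivDiff_permDivDiff (u v : Perm (Fin N)) (f : MvPolynomial (Fin N) ℤ) :
    permDivDiff u (permDivDiff v f) =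
      if len (u * v) = len u + len v then permDivDiff (u * v) f else 0 := by
  induction v using descent_induction generalizing f with
  | one => simp [permDivDiff_one, len_one]
  | mul_s v i hi hv ih =>
    have h := len_mul_s_of_hasDescentAt hi hv
    have hle := len_mul_le u (v * s i)
    rw [← permDivDiff_mul_s_divDiff hi hv, ih, ← mul_assoc, permDivDiff_divDiff hi, mul_s_mul_s]
    rw [← mul_assoc] at hle
    simp only [hasDescentAt_mul_s hi]
    by_cases huv : HasDescentAt (u * v) i
    · have := len_mul_s_of_hasDescentAt hi huv
      grind
    · have := len_mul_s_of_not_hasDescentAt hi huv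
      grind

lemma permDivDiff_s {i : ℕ} (hi : i ∈ Set.Ico 1 N) (f : MvPolynomial (Fin N) ℤ) :
    permDivDiff (s i) f = divDiff i f := by
  have hs : HasDescentAt (1 * s i : Perm (Fin N)) i :=
    (hasDescentAt_mul_s hi).mpr (not_hasDescentAt_one hi)
  rw [one_mul] at hs
  rw [← permDivDiff_mul_s_divDiff hi hs, s_mul_self, permDivDiff_one]

lemma isHomogeneous_permDivDiff {w : Perm (Fin N)} {f : MvPolynomial (Fin N) ℤ} {d : ℕ}
    (hf : f.IsHomogeneous (d + len w)) : (permDivDiff w f).IsHomogeneous d := by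
  induction w using descent_induction generalizing f with
  | one => rwa [permDivDiff_one, ← add_zero d, ← len_one (N := N)]
  | mul_s w i hi hw ih =>
    rw [← len_mul_s_of_hasDescentAt hi hw] at hf
    rw [← permDivDiff_mul_s_divDiff hi hw]
    exact ih (isHomogeneous_divDiff hi hf)

lemma permDivDiff_eq_zero_of_isHomogeneous {w : Perm (Fin N)} {f : MvPolynomial (Fin N) ℤ} {d : ℕ}
    (hf : f.IsHomogeneous d) (hd : d < len w) : permDivDiff w f = 0 := by
  induction w using descent_induction generalizing f d with
  | one => simp [len_one] at hd
  | mul_s w i hi hw ih =>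
    rw [← permDivDiff_mul_s_divDiff hi hw]
    rw [← len_mul_s_of_hasDescentAt hi hw] at hd
    cases d with
    | zero => rw [divDiff_eq_zero_of_isHomogeneous_zero hi hf, map_zero]
    | succ d => exact ih (isHomogeneous_divDiff hi hf) (by omega)

end PermDivDiff

section Duality

variable {N : ℕ}

lemma rename_perm_prod_X_pow (w : Perm (Fin N)) (a : Fin N → ℕ) :
    rename w (∏ j, X j ^ a j : MvPolynomial (Fin N) ℤ) = ∏ j, X j ^ a (w⁻¹ j) := by
  rw [map_prod, ← Equiv.prod_comp w fun j => X j ^ a (w⁻¹ j)]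
  simp only [map_pow, rename_X, Perm.inv_def, symm_apply_apply]

lemma isHomogeneous_staircase : (staircase N).IsHomogeneous (len (w0 N)) := by
  rw [len_w0]
  exact IsHomogeneous.prod _ _ _ fun j _ => isHomogeneous_X_pow j _

lemma constantCoeff_eq_zero_of_isHomogeneous {σ R : Type*} [CommSemiring R]
    {f : MvPolynomial σ R} {d : ℕ} (hf : f.IsHomogeneous d) (hd : d ≠ 0) :
    constantCoeff f = 0 :=
  hf.coeff_eq_zero (by simpa using hd.symm)

lemma len_inv_mul_w0_add_len (w : Perm (Fin N)) : len (w⁻¹ * w0 N) + len w = len (w0 N) := by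
  rw [← len_inv w, len_mul_w0_add_len]

variable [NeZero N]

lemma divDiff_X_mul {i : ℕ} (hi : i ∈ Set.Ico 1 N) {f : MvPolynomial (Fin N) ℤ}
    (hf : rename (s i) f = f) : divDiff i (X (pos N i) * f) = f := by
  rw [divDiff_eq_iff hi, map_mul, rename_X, t_apply_left, hf, simpleRoot, sub_mul]

lemma divDiff_prod_X_pow {i : ℕ} (hi : i ∈ Set.Ico 1 N) {a b : Fin N → ℕ}
    (hab : a = b + Pi.single (pos N i) 1) (hb : b (pos N i) = b (pos N (i + 1))) :
    divDiff i (∏ j, X j ^ a j : MvPolynomial (Fin N) ℤ) = ∏ j, X j ^ b j := by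
  have ha : (∏ j, X j ^ a j : MvPolynomial (Fin N) ℤ) = X (pos N i) * ∏ j, X j ^ b j := by
    simp only [hab, Pi.add_apply, pow_add, Finset.prod_mul_distrib, Pi.single_apply, pow_ite,
      pow_one, pow_zero, Finset.prod_ite_eq', Finset.mem_univ, if_true, mul_comm]
  rw [ha, divDiff_X_mul hi]
  rw [rename_perm_prod_X_pow, s_inv]
  refine Finset.prod_congr rfl fun j _ => ?_
  simp only [s, t, swap_apply_def]
  grind

lemma exists_permDivDiff_eq_one_of_divDiff {i : ℕ} (hi : i ∈ Set.Ico 1 N)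
    {f : MvPolynomial (Fin N) ℤ} (h : ∃ w : Perm (Fin N), permDivDiff w (divDiff i f) = 1) :
    ∃ w : Perm (Fin N), permDivDiff w f = 1 := by
  obtain ⟨w, hw⟩ := h
  rw [permDivDiff_divDiff hi] at hw
  split_ifs at hw with hdes
  · exact absurd hw zero_ne_one
  · exact ⟨_, hw⟩

/-- The operators `∂₁, ∂₂, …, ∂_{p+1}` successively lower the exponents of `x₁^{p+1} x₂^p ⋯ x_{p+1}`
to those of `x₁^p x₂^{p-1} ⋯ x_p`. -/
lemma exists_permDivDiff_prod_X_pow_sub_eq_one {p : ℕ} (hp : p < N) :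
    ∃ w : Perm (Fin N), permDivDiff w (∏ j : Fin N, X j ^ (p - (j : ℕ))) = 1 := by
  induction p with
  | zero => exact ⟨1, by simp [permDivDiff_one]⟩
  | succ p ih =>
    suffices ∀ q ≤ p + 1, ∃ w : Perm (Fin N), permDivDiff w
        (∏ j : Fin N, X j ^ if (j : ℕ) < q then p - j else p + 1 - j) = 1 by
      simpa using this 0 (Nat.zero_le _)
    intro q hq
    induction hq using Nat.decreasingInduction with
    | self =>
      convert ih (by omega) using 7 with w j
      split_ifs <;> omega
    | of_succ q hq ihq =>
      have hi : q + 1 ∈ Set.Ico 1 N := ⟨by omega, by omega⟩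
      have h₁ := coe_pos (N := N) (Set.Ico_subset_Icc_self hi)
      have h₂ := coe_pos (N := N) (j := q + 1 + 1) ⟨by omega, hi.2⟩
      refine exists_permDivDiff_eq_one_of_divDiff hi ?_
      rwa [divDiff_prod_X_pow hi (b := fun j => if (j : ℕ) < q + 1 then p - j else p + 1 - j)]
      · funext j
        simp only [Pi.add_apply, Pi.single_apply, Fin.ext_iff, h₁]
        split_ifs <;> omega
      · simp only [h₁, h₂]
        split_ifs <;> omega

lemma len_eq_of_constantCoeff_permDivDiff_ne_zero {w : Perm (Fin N)} {f : MvPolynomial (Fin N) ℤ}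
    {d : ℕ} (hf : f.IsHomogeneous d) (h : constantCoeff (permDivDiff w f) ≠ 0) : len w = d := by
  contrapose! h
  rcases h.lt_or_gt with hlt | hlt
  · rw [← Nat.sub_add_cancel hlt.le] at hf
    exact constantCoeff_eq_zero_of_isHomogeneous (isHomogeneous_permDivDiff hf) (by omega)
  · rw [permDivDiff_eq_zero_of_isHomogeneous hf hlt, map_zero]

lemma permDivDiff_w0_staircase : permDivDiff (w0 N) (staircase N) = 1 := by
  have hN := NeZero.pos N
  obtain ⟨w, hw⟩ := exists_permDivDiff_prod_X_pow_sub_eq_one (N := N) (p := N - 1) (by omega)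
  have hlen := len_eq_of_constantCoeff_permDivDiff_ne_zero (w := w) isHomogeneous_staircase
    (by rw [staircase, hw]; simp)
  rwa [eq_w0_of_len_eq hlen] at hw

lemma isHomogeneous_schubertPoly (w : Perm (Fin N)) : (schubertPoly N w).IsHomogeneous (len w) := by
  refine isHomogeneous_permDivDiff ?_
  rw [add_comm, len_inv_mul_w0_add_len]
  exact isHomogeneous_staircase

lemma permDivDiff_schubertPoly_of_len_le {u v : Perm (Fin N)} (h : len v ≤ len u) :
    permDivDiff u (schubertPoly N v) = if u = v then 1 else 0 := by
  have hv := len_inv_mul_w0_add_len v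
  rw [schubertPoly_eq_permDivDiff, permDivDiff_permDivDiff, ← mul_assoc]
  have huv := len_mul_w0_add_len (u * v⁻¹)
  split_ifs with hlen heq heq
  · rw [heq, mul_inv_cancel, one_mul, permDivDiff_w0_staircase]
  · have : u * v⁻¹ = 1 := eq_one_of_len_eq_zero (by omega)
    exact absurd (mul_inv_eq_one.mp this) heq
  · rw [heq, mul_inv_cancel, one_mul] at hlen
    omega
  · rfl

lemma constantCoeff_permDivDiff_schubertPoly (u v : Perm (Fin N)) :
    constantCoeff (permDivDiff u (schubertPoly N v)) = if u = v then 1 else 0 := by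
  by_cases h : len u = len v
  · rw [permDivDiff_schubertPoly_of_len_le h.ge, apply_ite constantCoeff, map_one, map_zero]
  · rw [if_neg (by rintro rfl; exact h rfl)]
    by_contra hne
    exact h (len_eq_of_constantCoeff_permDivDiff_ne_zero (isHomogeneous_schubertPoly v) hne)

lemma divDiff_schubertPoly_eq_zero {w : Perm (Fin N)} {i : ℕ} (hi : i ∈ Set.Ico 1 N)
    (hw : ¬ HasDescentAt w i) : divDiff i (schubertPoly N w) = 0 := by
  have h := len_inv_mul_w0_add_len (w * s i)
  have h' := len_inv_mul_w0_add_len w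
  rw [mul_inv_rev, s_inv, len_mul_s_of_not_hasDescentAt hi hw, mul_assoc] at h
  rw [← permDivDiff_s hi, schubertPoly_eq_permDivDiff, permDivDiff_permDivDiff, if_neg (by omega)]

lemma eq_zero_of_sum_mul_permDivDiff_eq_zero {a : Perm (Fin N) → MvPolynomial (Fin N) ℤ}
    (h : ∀ g, ∑ u, a u * permDivDiff u g = 0) : a = 0 := by
  funext v
  induction hn : len v using Nat.strong_induction_on generalizing v with
  | h n ih =>
  have hv := h (schubertPoly N v)
  rw [Finset.sum_eq_single v] at hv
  · simpa [permDivDiff_schubertPoly_of_len_le] using hv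
  · intro u _ huv
    rcases lt_or_ge (len u) (len v) with hlt | hle
    · rw [ih _ (hn ▸ hlt) u rfl, Pi.zero_apply, zero_mul]
    · rw [permDivDiff_schubertPoly_of_len_le hle, if_neg huv, mul_zero]
  · exact fun hv => absurd (Finset.mem_univ v) hv

end Duality

section CoinvariantRing

variable {N : ℕ} [NeZero N]

lemma permDivDiff_mul_of_isSymmetric (w : Perm (Fin N)) {f g : MvPolynomial (Fin N) ℤ}
    (hf : f.IsSymmetric) : permDivDiff w (f * g) = f * permDivDiff w g := by
  induction w using descent_induction generalizing g with
  | one => simp only [permDivDiff_one]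
  | mul_s w i hi hw ih =>
    rw [← permDivDiff_mul_s_divDiff hi hw, divDiff_mul hi,
      (divDiff_eq_zero_iff hi).mpr (hf _), hf, zero_mul, zero_add, ih,
      permDivDiff_mul_s_divDiff hi hw]

lemma constantCoeff_permDivDiff_of_mem_symIdeal (w : Perm (Fin N)) {f : MvPolynomial (Fin N) ℤ}
    (hf : f ∈ symIdeal N) : constantCoeff (permDivDiff w f) = 0 := by
  induction hf using Submodule.closure_induction with
  | zero => simp only [map_zero]
  | add f g _ _ hf hg => rw [map_add, map_add, hf, hg, add_zero]
  | smul_mem g f hf =>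
    rw [smul_eq_mul, mul_comm, permDivDiff_mul_of_isSymmetric w hf.1, map_mul, hf.2, zero_mul]

lemma eq_constantCoeff_permDivDiff_of_eq_sum {f : MvPolynomial (Fin N) ℤ} {c : Perm (Fin N) → ℤ}
    (h : Ideal.Quotient.mk (symIdeal N) f = ∑ u, c u • SS N u) (w : Perm (Fin N)) :
    c w = constantCoeff (permDivDiff w f) := by
  have hmem : f - ∑ u, c u • schubertPoly N u ∈ symIdeal N := by
    rw [← Ideal.Quotient.mk_eq_mk_iff_sub_mem, h, map_sum]
    simp only [map_zsmul, SS]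
  have h₀ := constantCoeff_permDivDiff_of_mem_symIdeal w hmem
  simp only [map_sub, map_sum, map_zsmul, constantCoeff_permDivDiff_schubertPoly, smul_eq_mul,
    mul_ite, mul_one, mul_zero, Finset.sum_ite_eq, Finset.mem_univ, if_true] at h₀
  exact (sub_eq_zero.mp h₀).symm

end CoinvariantRing

section LeibnizMatrix

variable {N : ℕ} [NeZero N]

lemma sum_mul_permDivDiff_divDiff {i : ℕ} (hi : i ∈ Set.Ico 1 N)
    (a : Perm (Fin N) → MvPolynomial (Fin N) ℤ) (g : MvPolynomial (Fin N) ℤ) :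
    ∑ w, a w * permDivDiff w (divDiff i g) =
      ∑ w, (if HasDescentAt w i then a (w * s i) else 0) * permDivDiff w g := by
  rw [← Equiv.sum_comp (Equiv.mulRight (s i))]
  refine Finset.sum_congr rfl fun w _ => ?_
  rw [coe_mulRight, permDivDiff_divDiff hi, hasDescentAt_mul_s hi, mul_s_mul_s]
  split_ifs <;> simp only [mul_zero, zero_mul]

lemma permDivDiff_mul_eq_sum_of_hasDescentAt {i : ℕ} (hi : i ∈ Set.Ico 1 N) {u : Perm (Fin N)}
    (hu : HasDescentAt u i) {f : MvPolynomial (Fin N) ℤ}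
    {a b : Perm (Fin N) → MvPolynomial (Fin N) ℤ}
    (ha : ∀ g, permDivDiff (u * s i) (divDiff i f * g) = ∑ w, a w * permDivDiff w g)
    (hb : ∀ g, permDivDiff (u * s i) (rename (s i) f * g) = ∑ w, b w * permDivDiff w g)
    (g : MvPolynomial (Fin N) ℤ) :
    permDivDiff u (f * g) =
      ∑ w, (a w + if HasDescentAt w i then b (w * s i) else 0) * permDivDiff w g := by
  rw [← permDivDiff_mul_s_divDiff hi hu, divDiff_mul hi, map_add, ha, hb,
    sum_mul_permDivDiff_divDiff hi, ← Finset.sum_add_distrib]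
  simp only [add_mul]

lemma exists_permDivDiff_mul_eq_sum (u : Perm (Fin N)) (f : MvPolynomial (Fin N) ℤ) :
    ∃ a : Perm (Fin N) → MvPolynomial (Fin N) ℤ,
      ∀ g, permDivDiff u (f * g) = ∑ w, a w * permDivDiff w g := by
  induction u using descent_induction generalizing f with
  | one => exact ⟨Pi.single 1 f, fun g => by simp [permDivDiff_one, Pi.single_apply, ite_mul]⟩
  | mul_s u i hi hu ih =>
    obtain ⟨a, ha⟩ := ih (divDiff i f)
    obtain ⟨b, hb⟩ := ih (rename (s i) f)
    exact ⟨_, permDivDiff_mul_eq_sum_of_hasDescentAt hi hu ha hb⟩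

/-- The matrix of multiplication by `f` on the basis of operators `∂_u`, that is, the coefficients
of the generalized Leibniz rule `∂_u (f g) = ∑ w, leibnizMatrix f u w * ∂_w g`. -/
noncomputable def leibnizMatrix (f : MvPolynomial (Fin N) ℤ) :
    Matrix (Perm (Fin N)) (Perm (Fin N)) (MvPolynomial (Fin N) ℤ) :=
  Matrix.of fun u => (exists_permDivDiff_mul_eq_sum u f).choose

lemma permDivDiff_mul (u : Perm (Fin N)) (f g : MvPolynomial (Fin N) ℤ) :
    permDivDiff u (f * g) = ∑ w, leibnizMatrix f u w * permDivDiff w g :=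
  (exists_permDivDiff_mul_eq_sum u f).choose_spec g

lemma leibnizMatrix_eq_of_forall {u : Perm (Fin N)} {f : MvPolynomial (Fin N) ℤ}
    {a : Perm (Fin N) → MvPolynomial (Fin N) ℤ}
    (h : ∀ g, permDivDiff u (f * g) = ∑ w, a w * permDivDiff w g) : leibnizMatrix f u = a := by
  refine sub_eq_zero.mp (eq_zero_of_sum_mul_permDivDiff_eq_zero fun g => ?_)
  simp only [Pi.sub_apply, sub_mul, Finset.sum_sub_distrib]
  rw [← permDivDiff_mul, h, sub_self]

lemma leibnizMatrix_mul (f g : MvPolynomial (Fin N) ℤ) :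
    leibnizMatrix (f * g) = leibnizMatrix f * leibnizMatrix g := by
  funext u
  refine leibnizMatrix_eq_of_forall fun h => ?_
  simp only [Matrix.mul_apply, Finset.sum_mul]
  rw [Finset.sum_comm, mul_assoc, permDivDiff_mul]
  refine Finset.sum_congr rfl fun x _ => ?_
  simp only [permDivDiff_mul x g h, Finset.mul_sum, mul_assoc]

lemma leibnizMatrix_apply_of_isSymmetric {f : MvPolynomial (Fin N) ℤ} (hf : f.IsSymmetric)
    (u w : Perm (Fin N)) : leibnizMatrix f u w = if w = u then f else 0 :=
  congrFun (leibnizMatrix_eq_of_forall (a := fun w => if w = u then f else 0) fun g => by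
    simp only [permDivDiff_mul_of_isSymmetric u hf, ite_mul, zero_mul, Finset.sum_ite_eq',
      Finset.mem_univ, if_true]) w

lemma leibnizMatrix_one_apply (f : MvPolynomial (Fin N) ℤ) (w : Perm (Fin N)) :
    leibnizMatrix f 1 w = if w = 1 then f else 0 :=
  congrFun (leibnizMatrix_eq_of_forall (a := fun w => if w = 1 then f else 0) fun g => by
    simp only [permDivDiff_one, ite_mul, zero_mul, Finset.sum_ite_eq', Finset.mem_univ,
      if_true]) w

lemma leibnizMatrix_apply_of_hasDescentAt {i : ℕ} (hi : i ∈ Set.Ico 1 N) {u : Perm (Fin N)}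
    (hu : HasDescentAt u i) (f : MvPolynomial (Fin N) ℤ) (w : Perm (Fin N)) :
    leibnizMatrix f u w = leibnizMatrix (divDiff i f) (u * s i) w +
      if HasDescentAt w i then leibnizMatrix (rename (s i) f) (u * s i) (w * s i) else 0 :=
  congrFun (leibnizMatrix_eq_of_forall <| permDivDiff_mul_eq_sum_of_hasDescentAt hi hu
    (permDivDiff_mul _ _) (permDivDiff_mul _ _)) w

lemma eq_or_len_lt_of_leibnizMatrix_ne_zero {f : MvPolynomial (Fin N) ℤ} {u w : Perm (Fin N)}
    (h : leibnizMatrix f u w ≠ 0) : w = u ∨ len w < len u := by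
  induction u using descent_induction generalizing f w with
  | one =>
    rw [leibnizMatrix_one_apply, ite_ne_right_iff] at h
    exact Or.inl h.1
  | mul_s u i hi hu ih =>
    have hlen := len_mul_s_of_hasDescentAt hi hu
    rw [leibnizMatrix_apply_of_hasDescentAt hi hu] at h
    by_cases hd : leibnizMatrix (divDiff i f) (u * s i) w = 0
    · rw [hd, zero_add, ite_ne_right_iff] at h
      have hlenw := len_mul_s_of_hasDescentAt hi h.1
      exact (ih h.2).imp mul_right_cancel fun hlt => by omega
    · rcases ih hd with rfl | hlt <;> omega

lemma leibnizMatrix_apply_self (f : MvPolynomial (Fin N) ℤ) (u : Perm (Fin N)) :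
    leibnizMatrix f u u = rename u f := by
  induction u using descent_induction generalizing f with
  | one => rw [leibnizMatrix_one_apply, if_pos rfl, Perm.coe_one, rename_id_apply]
  | mul_s u i hi hu ih =>
    have hlen := len_mul_s_of_hasDescentAt hi hu
    have hzero : leibnizMatrix (divDiff i f) (u * s i) u = 0 := by
      by_contra h
      rcases eq_or_len_lt_of_leibnizMatrix_ne_zero h with heq | hlt
      · rw [← heq] at hlen
        omega
      · omega
    rw [leibnizMatrix_apply_of_hasDescentAt hi hu, if_pos hu, hzero, zero_add, ih,
      rename_rename_perm, mul_s_mul_s]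

lemma exists_eq_mul_swap_of_leibnizMatrix_ne_zero {f : MvPolynomial (Fin N) ℤ}
    (hf : f.IsHomogeneous 1) {u w : Perm (Fin N)} (h : leibnizMatrix f u w ≠ 0) (hwu : w ≠ u) :
    len w + 1 = len u ∧ ∃ a b, w = u * swap a b ∧ rename (swap a b) f ≠ f := by
  induction u using descent_induction generalizing f w with
  | one =>
    rw [leibnizMatrix_one_apply, if_neg hwu] at h
    exact absurd rfl h
  | mul_s u i hi hu ih =>
    have hlen := len_mul_s_of_hasDescentAt hi hu
    rw [leibnizMatrix_apply_of_hasDescentAt hi hu] at h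
    by_cases hd : leibnizMatrix (divDiff i f) (u * s i) w = 0
    · rw [hd, zero_add, ite_ne_right_iff] at h
      have hlenw := len_mul_s_of_hasDescentAt hi h.1
      obtain ⟨hlen', a, b, heq, hab⟩ :=
        ih hf.rename_isHomogeneous h.2 (mul_left_injective _ |>.ne hwu)
      have hconj : swap (s i a) (s i b) = s i * swap a b * s i := by
        rw [swap_apply_apply, s_inv]
      refine ⟨by omega, s i a, s i b, ?_, fun hfix => hab ?_⟩
      · rw [hconj, ← mul_assoc, ← mul_assoc, ← heq, mul_s_mul_s]
      · rw [hconj, ← rename_rename_perm, ← rename_rename_perm] at hfix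
        rw [← rename_s_rename_s i (rename (swap a b) _), hfix]
    · have hsymm := isSymmetric_of_isHomogeneous_zero (isHomogeneous_divDiff hi hf)
      rw [leibnizMatrix_apply_of_isSymmetric hsymm, ite_eq_right_iff, Classical.not_imp] at hd
      obtain ⟨rfl, hd⟩ := hd
      refine ⟨hlen, pos N i, pos N (i + 1), rfl, fun hfix => hd ?_⟩
      exact (divDiff_eq_zero_iff hi).mpr hfix

/-- Compare the `(u, w)` entries of the two products of the commuting matrices of `f` and `g`: the
diagonal entries contribute `(ug - wg)` times the `(u, w)` entry of `f`. -/
lemma exists_leibnizMatrix_ne_zero_of_rename_ne {f g : MvPolynomial (Fin N) ℤ}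
    {u w : Perm (Fin N)} (hf : leibnizMatrix f u w ≠ 0) (hg : rename u g ≠ rename w g) :
    (∃ x ≠ u, leibnizMatrix g u x ≠ 0 ∧ leibnizMatrix f x w ≠ 0) ∨
      ∃ x ≠ w, leibnizMatrix f u x ≠ 0 ∧ leibnizMatrix g x w ≠ 0 := by
  have hcomm : leibnizMatrix g * leibnizMatrix f = leibnizMatrix f * leibnizMatrix g := by
    rw [← leibnizMatrix_mul, mul_comm, leibnizMatrix_mul]
  contrapose! hg
  obtain ⟨hgf, hfg⟩ := hg
  refine mul_left_cancel₀ hf ?_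
  calc leibnizMatrix f u w * rename u g
      = (leibnizMatrix g * leibnizMatrix f) u w := by
        rw [Matrix.mul_apply, Finset.sum_eq_single u, leibnizMatrix_apply_self, mul_comm]
        · exact fun x _ hx => mul_eq_zero_of_ne_zero_imp_eq_zero (hgf x hx)
        · exact fun hu => absurd (Finset.mem_univ u) hu
    _ = (leibnizMatrix f * leibnizMatrix g) u w := by rw [hcomm]
    _ = leibnizMatrix f u w * rename w g := by
        rw [Matrix.mul_apply, Finset.sum_eq_single w, leibnizMatrix_apply_self]
        · exact fun x _ hx => mul_eq_zero_of_ne_zero_imp_eq_zero (hfg x hx)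
        · exact fun hw => absurd (Finset.mem_univ w) hw

end LeibnizMatrix

section FundamentalWeight

variable {N : ℕ} {k : ℕ}

/-- The linear form `x₁ + ⋯ + x_k`; it separates the cosets of `S_k × S_{N-k}`. -/
noncomputable def fundamentalWeight (N k : ℕ) : MvPolynomial (Fin N) ℤ :=
  ∑ a ∈ Finset.univ.filter fun a : Fin N => (a : ℕ) < k, X a

lemma isHomogeneous_fundamentalWeight : (fundamentalWeight N k).IsHomogeneous 1 :=
  IsHomogeneous.sum _ _ _ fun a _ => isHomogeneous_X ℤ a

lemma coeff_single_rename_fundamentalWeight (u : Perm (Fin N)) (a : Fin N) :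
    coeff (Finsupp.single (u a) 1) (rename u (fundamentalWeight N k)) =
      if (a : ℕ) < k then 1 else 0 := by
  simp [fundamentalWeight, coeff_sum, coeff_X, Finsupp.single_left_inj]

lemma rename_fundamentalWeight_eq_self_iff {u : Perm (Fin N)} :
    rename u (fundamentalWeight N k) = fundamentalWeight N k ↔
      ∀ a, (u a : ℕ) < k ↔ (a : ℕ) < k := by
  constructor
  · intro h a
    have hu := coeff_single_rename_fundamentalWeight (k := k) u a
    have h₁ := coeff_single_rename_fundamentalWeight (k := k) 1 (u a)
    rw [Perm.coe_one, rename_id_apply, id] at h₁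
    rw [h, h₁] at hu
    constructor <;> intro hlt <;> by_contra hnot <;> simp [hlt, hnot] at hu
  · intro h
    rw [fundamentalWeight, map_sum]
    simp only [rename_X]
    exact Finset.sum_equiv u (by simp [h]) fun a _ => rfl

lemma rename_swap_fundamentalWeight {a b : Fin N} (hab : (a : ℕ) < k ↔ (b : ℕ) < k) :
    rename (swap a b) (fundamentalWeight N k) = fundamentalWeight N k :=
  rename_fundamentalWeight_eq_self_iff.mpr fun c => by
    rw [swap_apply_def]
    split_ifs with ha hb
    · rw [ha, hab]
    · rw [hb, hab]
    · rfl

variable [NeZero N]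

lemma rename_s_fundamentalWeight {i : ℕ} (hi : i ∈ Set.Ico 1 N) (hik : i ≠ k) :
    rename (s i) (fundamentalWeight N k) = fundamentalWeight N k := by
  refine rename_swap_fundamentalWeight ?_
  rw [coe_pos (Set.Ico_subset_Icc_self hi), coe_pos ⟨by omega, hi.2⟩]
  have := hi.1
  omega

lemma len_eq_of_kCover {u w : Perm (Fin N)} (h : kCover N k w u) : len u = len w + 1 := by
  obtain ⟨-, -, -, -, -, -, -, hlen⟩ := h
  exact hlen

lemma kCover_of_leibnizMatrix_fundamentalWeight_ne_zero {u w : Perm (Fin N)}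
    (h : leibnizMatrix (fundamentalWeight N k) u w ≠ 0) (hwu : w ≠ u) : kCover N k w u := by
  obtain ⟨hlen, a, b, rfl, hab⟩ :=
    exists_eq_mul_swap_of_leibnizMatrix_ne_zero isHomogeneous_fundamentalWeight h hwu
  have hcover {a b : Fin N} (ha : (a : ℕ) < k) (hb : k ≤ b)
      (hlen : len (u * swap a b) + 1 = len u) : kCover N k (u * swap a b) u := by
    refine ⟨a + 1, b + 1, by omega, ha, by omega, b.isLt, ?_, hlen.symm⟩
    rw [t, pos_coe_add_one, pos_coe_add_one, mul_assoc, swap_mul_self, mul_one]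
  have hblock := mt rename_swap_fundamentalWeight hab
  obtain ⟨ha, hb⟩ | ⟨hb, ha⟩ : (a : ℕ) < k ∧ k ≤ b ∨ (b : ℕ) < k ∧ k ≤ a := by omega
  · exact hcover ha hb hlen
  · rw [swap_comm] at hlen ⊢
    exact hcover hb ha hlen

end FundamentalWeight

section Grassmannian

variable {N : ℕ} [NeZero N] {k : ℕ}

/-- `w` is Grassmannian of descent `k`: it has no descent except possibly at `k`. -/
def IsGrassmannian (k : ℕ) (w : Perm (Fin N)) : Prop :=
  ∀ i ∈ Set.Ico 1 N, i ≠ k → ¬ HasDescentAt w i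

namespace IsGrassmannian

variable {u w : Perm (Fin N)}

lemma lt_and_le_of_mem_inversions (hw : IsGrassmannian k w) {p : Fin N × Fin N}
    (hp : p ∈ inversions w) : (p.1 : ℕ) < k ∧ k ≤ p.2 := by
  obtain ⟨hlt, hinv⟩ := mem_inversions.mp hp
  by_contra! hk
  have hmono : StrictMonoOn (fun j => w (pos N j)) (Set.Icc (p.1 + 1) (p.2 + 1)) :=
    strictMonoOn_of_forall_not_hasDescentAt (by omega) p.2.isLt fun i hi =>
      hw i ⟨by grind, by grind⟩ (by grind)
  have hle : (p.1 : ℕ) + 1 ≤ p.2 + 1 := by omega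
  have hlt' := hmono (Set.left_mem_Icc.mpr hle) (Set.right_mem_Icc.mpr hle) (by omega)
  simp only [pos_coe_add_one] at hlt'
  exact lt_asymm hinv hlt'

lemma len_le_of_rename_fundamentalWeight_eq (hu : IsGrassmannian k u)
    (h : rename u (fundamentalWeight N k) = rename w (fundamentalWeight N k)) :
    len u ≤ len w := by
  obtain ⟨x, rfl⟩ : ∃ x, u = w * x := ⟨w⁻¹ * u, (mul_inv_cancel_left w u).symm⟩
  rw [← rename_rename_perm] at h
  have hx := rename_fundamentalWeight_eq_self_iff.mp (rename_injective _ w.injective h)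
  rw [← card_inversions, ← card_inversions, ← Finset.card_map (prodCongr x x).toEmbedding]
  refine Finset.card_le_card fun p hp => ?_
  obtain ⟨q, hq, rfl⟩ := Finset.mem_map.mp hp
  have hk := hu.lt_and_le_of_mem_inversions hq
  have h₁ := hx q.1
  have h₂ := hx q.2
  exact mem_inversions.mpr ⟨Fin.lt_def.mpr (by simp; omega), (mem_inversions.mp hq).2⟩

end IsGrassmannian

variable {f : MvPolynomial (Fin N) ℤ} {u w : Perm (Fin N)}

lemma eq_of_leibnizMatrix_ne_zero_of_rename_fundamentalWeight_eq
    (hf : ∀ i ∈ Set.Ico 1 N, i ≠ k → rename (s i) f = f) (h : leibnizMatrix f u w ≠ 0)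
    (huw : rename u (fundamentalWeight N k) = rename w (fundamentalWeight N k)) : w = u := by
  induction hn : len u using Nat.strong_induction_on generalizing u w with
  | h n ih =>
  by_cases hu : IsGrassmannian k u
  · have hle := hu.len_le_of_rename_fundamentalWeight_eq huw
    exact (eq_or_len_lt_of_leibnizMatrix_ne_zero h).resolve_right hle.not_gt
  · simp only [IsGrassmannian, not_forall, not_not] at hu
    obtain ⟨i, hi, hik, hdes⟩ := hu
    have hω := rename_s_fundamentalWeight hi hik
    have hlen := len_mul_s_of_hasDescentAt hi hdes
    rw [leibnizMatrix_apply_of_hasDescentAt hi hdes, (divDiff_eq_zero_iff hi).mpr (hf i hi hik),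
      hf i hi hik, leibnizMatrix_apply_of_isSymmetric IsSymmetric.zero, ite_self, zero_add,
      ite_ne_right_iff] at h
    refine mul_right_cancel (ih _ (by omega) h.2 ?_ rfl)
    rw [← rename_rename_perm, ← rename_rename_perm, hω, huw]

lemma reflTransGen_kCover_of_leibnizMatrix_ne_zero
    (hf : ∀ i ∈ Set.Ico 1 N, i ≠ k → rename (s i) f = f) (h : leibnizMatrix f u w ≠ 0) :
    Relation.ReflTransGen (kCover N k) w u := by
  induction hn : len u - len w using Nat.strong_induction_on generalizing u w with
  | h n ih =>
  by_cases huw : rename u (fundamentalWeight N k) = rename w (fundamentalWeight N k)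
  · rw [eq_of_leibnizMatrix_ne_zero_of_rename_fundamentalWeight_eq hf h huw]
  rcases exists_leibnizMatrix_ne_zero_of_rename_ne h huw with ⟨x, hxu, hω, hfx⟩ | ⟨x, hxw, hfx, hω⟩
  · have hcover := kCover_of_leibnizMatrix_fundamentalWeight_ne_zero hω hxu
    have hlen := len_eq_of_kCover hcover
    have hle : len w ≤ len x := by
      rcases eq_or_len_lt_of_leibnizMatrix_ne_zero hfx with rfl | hlt <;> omega
    exact (ih _ (by omega) hfx rfl).tail hcover
  · have hcover := kCover_of_leibnizMatrix_fundamentalWeight_ne_zero hω hxw.symm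
    have hlen := len_eq_of_kCover hcover
    have hle : len x ≤ len u := by
      rcases eq_or_len_lt_of_leibnizMatrix_ne_zero hfx with rfl | hlt <;> omega
    exact (ih _ (by omega) hfx rfl).head hcover

theorem kBruhat_of_structure_constant_ne_zero_general {v w w' : Perm (Fin N)}
    {c : Perm (Fin N) → ℤ} (hv : IsGrassmannian k v) (hv₁ : v ≠ 1)
    (hc : SS N w * SS N v = ∑ u, c u • SS N u) (hne : c w' ≠ 0) :
    kBruhat N k w w' ∧ len w' = len w + len v := by
  rw [SS, SS, mul_comm, ← map_mul] at hc
  rw [eq_constantCoeff_permDivDiff_of_eq_sum hc] at hne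
  have hlen : len w' = len v + len w := len_eq_of_constantCoeff_permDivDiff_ne_zero
    ((isHomogeneous_schubertPoly v).mul (isHomogeneous_schubertPoly w)) hne
  have hv₀ : len v ≠ 0 := fun h => hv₁ (eq_one_of_len_eq_zero h)
  have hentry : leibnizMatrix (schubertPoly N v) w' w ≠ 0 := by
    contrapose! hne
    rw [permDivDiff_mul, map_sum]
    simp [constantCoeff_permDivDiff_schubertPoly, hne]
  have hchain := reflTransGen_kCover_of_leibnizMatrix_ne_zero (fun i hi hik =>
    (divDiff_eq_zero_iff hi).mp (divDiff_schubertPoly_eq_zero hi (hv i hi hik))) hentry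
  rcases Relation.reflTransGen_iff_eq_or_transGen.mp hchain with rfl | hchain
  · omega
  · exact ⟨hchain, by omega⟩

end Grassmannian

section RPerm

variable {N k m : ℕ} [NeZero N]

lemma rPerm_succ : rPerm N k (m + 1) = rPerm N k m * t N k (k + 1 + m) := by
  simp [rPerm, List.range_succ]

lemma coe_rPerm_apply (hk : 1 ≤ k) (hkm : k + m ≤ N) (a : Fin N) :
    (rPerm N k m a : ℕ) = if (a : ℕ) + 1 = k then k + m - 1
      else if k ≤ a ∧ (a : ℕ) < k + m then a - 1 else a := by
  induction m generalizing a with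
  | zero => simp [rPerm]; grind
  | succ m ih =>
    have h₁ := coe_pos (N := N) (j := k) ⟨hk, by omega⟩
    have h₂ := coe_pos (N := N) (j := k + 1 + m) ⟨by omega, by omega⟩
    rw [rPerm_succ, Perm.mul_apply, ih (by omega), t, swap_apply_def]
    simp only [Fin.ext_iff]
    grind

lemma len_rPerm (hk : 1 ≤ k) (hkm : k + m ≤ N) : len (rPerm N k m) = m := by
  have h₁ := coe_pos (N := N) (j := k) ⟨hk, by omega⟩
  have h₂ := coe_pos (N := N) (j := k + m) ⟨by omega, by omega⟩
  have h : inversions (rPerm N k m) = {pos N k} ×ˢ Finset.Ioc (pos N k) (pos N (k + m)) := by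
    ext p
    simp only [mem_inversions, Finset.mem_product, Finset.mem_singleton, Finset.mem_Ioc,
      Fin.lt_def, Fin.le_def, Fin.ext_iff, coe_rPerm_apply hk hkm, h₁, h₂]
    grind
  rw [← card_inversions, h, Finset.card_product, Finset.card_singleton, Fin.card_Ioc, h₁, h₂]
  omega

lemma isGrassmannian_rPerm (hk : 1 ≤ k) (hkm : k + m ≤ N) : IsGrassmannian k (rPerm N k m) := by
  intro i hi hik
  have h₁ := coe_pos (N := N) (Set.Ico_subset_Icc_self hi)
  have h₂ := coe_pos (N := N) (j := i + 1) ⟨by omega, hi.2⟩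
  rw [not_hasDescentAt_iff hi, Fin.lt_def, coe_rPerm_apply hk hkm, coe_rPerm_apply hk hkm, h₁, h₂]
  have := hi.1
  grind

end RPerm

/-- If the structure constant `c^{w'}_{w, r[k,m]}` is nonzero then `w <ₖ w'` in the
`k`-Bruhat order and `ℓ(w') = ℓ(w) + m`.  The structure constants are encoded by
their defining property (here the paper's `n` is `n+1`). -/
theorem kBruhat_of_structure_constant_ne_zero (n k m : ℕ) (hk : 1 ≤ k) (hm : 1 ≤ m)
    (hkm : k + m ≤ n + 1) (w w' : Equiv.Perm (Fin (n + 1)))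
    (c : Equiv.Perm (Fin (n + 1)) → ℤ)
    (hc : SS (n + 1) w * SS (n + 1) (rPerm (n + 1) k m) =
      ∑ u, c u • SS (n + 1) u)
    (hne : c w' ≠ 0) :
    kBruhat (n + 1) k w w' ∧ len w' = len w + m := by
  have hlen := len_rPerm hk hkm
  have hne₁ : rPerm (n + 1) k m ≠ 1 := by
    intro h
    rw [h, len_one] at hlen
    omega
  simpa only [hlen] using
    kBruhat_of_structure_constant_ne_zero_general (isGrassmannian_rPerm hk hkm) hne₁ hc hne

end SchubertPieri
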